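/- arXiv:2009.12755 — 7 statements merged into one kernel-verified Lean document; each statement's English description precedes it below -/
import Mathlib

section
/- (Comparison Theorem.) Suppose the moment condition E|Y|^{1+ε} = ∫_{X×ℝ} |y|^{1+ε} dρ(x,y) < ∞ holds for some ε > 0, that ‖f⋆‖_∞ ≤ M, and that σ > max(2M, 1). Then for every measurable function f : X → ℝ with ‖f‖_∞ ≤ M, one has | [R^σ(f) − R^σ(f⋆)] − ‖f − f⋆‖_{2,ρ}² | ≤ c_ε / σ^ε, where c_ε = 2^{3+ε}(M+1)² E|Y|^{1+ε}. -/
open MeasureTheory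

/-- The Huber loss with scale `σ`. -/
noncomputable def huberLoss (σ t : ℝ) : ℝ :=
  if |t| ≤ σ then t ^ 2 else 2 * σ * |t| - σ ^ 2

lemma huberLoss_eq_sq_sub (σ t : ℝ) : huberLoss σ t = t ^ 2 - (max (|t| - σ) 0) ^ 2 := by
  unfold huberLoss
  split_ifs with h
  · rw [max_eq_right (by linarith)]; ring
  · rw [max_eq_left (by linarith)]; linear_combination sq_abs t

lemma measurable_huberLoss (σ : ℝ) : Measurable (huberLoss σ) := by
  simp only [funext (huberLoss_eq_sq_sub σ)]
  fun_prop

lemma abs_huberLoss_le {σ : ℝ} (hσ : 0 ≤ σ) (t : ℝ) : |huberLoss σ t| ≤ 2 * σ * |t| := by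
  unfold huberLoss
  have := abs_nonneg t
  split_ifs with h
  · rw [abs_of_nonneg (sq_nonneg t), ← sq_abs]; nlinarith
  · push Not at h
    rw [abs_of_nonneg (by nlinarith)]; nlinarith

/-- Truncated tails are dominated by a higher moment. -/
lemma max_sub_zero_le_rpow {ε s u : ℝ} (hε : 0 ≤ ε) (hs : 0 < s) (hu : 0 ≤ u) :
    max (u - s) 0 ≤ u ^ (1 + ε) / s ^ ε := by
  have hpos : 0 ≤ u ^ (1 + ε) / s ^ ε := by positivity
  refine max_le ?_ hpos
  rcases le_total u s with h | h
  · linarith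
  · have hu' : 0 < u := hs.trans_le h
    have hle : s ^ ε ≤ u ^ ε := Real.rpow_le_rpow hs.le h hε
    rw [le_div_iff₀ (by positivity), Real.rpow_add hu', Real.rpow_one]
    exact mul_le_mul (by linarith) hle (by positivity) hu

/-- The Huber loss increment differs from the square loss increment only in the tails of `y`. -/
lemma abs_huberLoss_sub_sub_le {M σ a b y : ℝ} (hσ : 2 * M ≤ σ) (ha : |a| ≤ M) (hb : |b| ≤ M) :
    |huberLoss σ (y - a) - huberLoss σ (y - b) - ((y - a) ^ 2 - (y - b) ^ 2)|
      ≤ 4 * M * max (|y| - σ / 2) 0 := by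
  have hM : 0 ≤ M := (abs_nonneg a).trans ha
  have excess_le {c : ℝ} (hc : |c| ≤ M) :
      max (|y - c| - σ) 0 ≤ max (|y| - σ / 2) 0 :=
    max_le_max_right 0 (by linarith [abs_sub y c])
  have hdiff : |max (|y - b| - σ) 0 - max (|y - a| - σ) 0| ≤ 2 * M := by
    calc _ ≤ |(|y - b| - σ) - (|y - a| - σ)| := abs_max_sub_max_le_abs _ _ _
      _ = |(|y - b| - |y - a|)| := by ring_nf
      _ ≤ |(y - b) - (y - a)| := abs_abs_sub_abs_le_abs_sub _ _
      _ = |a - b| := by ring_nf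
      _ ≤ 2 * M := by linarith [abs_sub a b]
  have hA := excess_le ha
  have hB := excess_le hb
  have hA0 := le_max_right (|y - a| - σ) 0
  have hB0 := le_max_right (|y - b| - σ) 0
  rw [huberLoss_eq_sq_sub, huberLoss_eq_sq_sub]
  set A := max (|y - a| - σ) 0
  set B := max (|y - b| - σ) 0
  calc _ = |(B - A) * (B + A)| := by ring_nf
    _ = |B - A| * (B + A) := by rw [abs_mul, abs_of_nonneg (add_nonneg hB0 hA0)]
    _ ≤ 2 * M * (2 * max (|y| - σ / 2) 0) :=
      mul_le_mul hdiff (by linarith) (by linarith) (by linarith)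
    _ = _ := by ring

lemma integrable_of_integrable_abs_rpow {α : Type*} [MeasurableSpace α] {μ : Measure α}
    [IsFiniteMeasure μ] {g : α → ℝ} {r : ℝ} (hr : 1 ≤ r) (hg : AEStronglyMeasurable g μ)
    (hint : Integrable (fun a => |g a| ^ r) μ) : Integrable g μ := by
  refine ((integrable_const (1 : ℝ)).add hint).mono' hg (.of_forall fun a => ?_)
  have hnn : 0 ≤ |g a| ^ r := by positivity
  rw [Real.norm_eq_abs, Pi.add_apply]
  rcases le_total |g a| 1 with h | h
  · linarith
  · linarith [Real.self_le_rpow_of_one_le h hr]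

lemma integrable_huberLoss_comp {α : Type*} [MeasurableSpace α] {μ : Measure α} {σ : ℝ}
    (hσ : 0 ≤ σ) {g : α → ℝ} (hg : Integrable g μ) :
    Integrable (fun a => huberLoss σ (g a)) μ :=
  (hg.abs.const_mul (2 * σ)).mono'
    ((measurable_huberLoss σ).comp_aemeasurable hg.aemeasurable).aestronglyMeasurable
    (.of_forall fun a => abs_huberLoss_le hσ (g a))

/-- The conditional mean is orthogonal to the noise. -/
lemma integral_mul_snd_eq_integral_mul_condMean {X : Type*} [MeasurableSpace X]
    {ρ : Measure (X × ℝ)} [IsFiniteMeasure ρ] {m h : X → ℝ}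
    (hm : ∀ᵐ x ∂ρ.fst, m x = ∫ y, y ∂(ρ.condKernel x))
    (hint : Integrable (fun p : X × ℝ => h p.1 * p.2) ρ) :
    ∫ p, h p.1 * p.2 ∂ρ = ∫ x, h x * m x ∂ρ.fst := by
  rw [← Measure.integral_condKernel hint]
  refine integral_congr_ae ?_
  filter_upwards [hm] with x hx
  rw [integral_const_mul, hx]

/-- Comparison theorem: under the `(1+ε)`-moment condition, for every measurable `f`
bounded by `M` and `σ > max(2M, 1)`,
`|[R^σ(f) − R^σ(f⋆)] − ‖f − f⋆‖²_{2,ρ}| ≤ c_ε / σ^ε` with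
`c_ε = 2^{3+ε} (M+1)² E|Y|^{1+ε}`. -/
theorem comparison_theorem
    {X : Type*} [MeasurableSpace X] [MetricSpace X] [CompactSpace X] [BorelSpace X]
    (ρ : Measure (X × ℝ)) [IsProbabilityMeasure ρ]
    (ε M σ : ℝ) (hε : 0 < ε) (hσ : max (2 * M) 1 < σ)
    (hmom : Integrable (fun p : X × ℝ => |p.2| ^ (1 + ε)) ρ)
    (fstar : X → ℝ) (hfstar_meas : Measurable fstar)
    (hfstar_bdd : ∀ x, |fstar x| ≤ M)
    (hfstar_mean : ∀ᵐ x ∂ρ.fst, fstar x = ∫ y, y ∂(ρ.condKernel x))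
    (f : X → ℝ) (hf_meas : Measurable f) (hf_bdd : ∀ x, |f x| ≤ M) :
    |((∫ p, huberLoss σ (p.2 - f p.1) ∂ρ) - ∫ p, huberLoss σ (p.2 - fstar p.1) ∂ρ)
        - ∫ x, (f x - fstar x) ^ 2 ∂ρ.fst|
      ≤ (2 : ℝ) ^ (3 + ε) * (M + 1) ^ 2 * (∫ p, |p.2| ^ (1 + ε) ∂ρ) / σ ^ ε := by
  have hσ1 : 1 < σ := (le_max_right _ _).trans_lt hσ
  have hσM : 2 * M < σ := (le_max_left _ _).trans_lt hσ
  have hσ0 : 0 < σ := by linarith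
  obtain ⟨p₀⟩ : Nonempty (X × ℝ) := nonempty_of_isProbabilityMeasure ρ
  have hM : 0 ≤ M := (abs_nonneg _).trans (hf_bdd p₀.1)
  have integrable_bounded {μ : Measure X} [IsFiniteMeasure μ] {g : X → ℝ} {C : ℝ}
      (hg : Measurable g) (hC : ∀ x, |g x| ≤ C) : Integrable g μ :=
    .of_bound hg.aestronglyMeasurable C (.of_forall hC)
  have hY : Integrable (fun p : X × ℝ => p.2) ρ :=
    integrable_of_integrable_abs_rpow (by linarith) measurable_snd.aestronglyMeasurable hmom
  have residual_integrable {g : X → ℝ} (hg : Measurable g) (hgM : ∀ x, |g x| ≤ M) :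
      Integrable (fun p : X × ℝ => p.2 - g p.1) ρ :=
    hY.sub (.of_bound (hg.comp measurable_fst).aestronglyMeasurable M
      (.of_forall fun p => hgM p.1))
  have hHf := integrable_huberLoss_comp hσ0.le (residual_integrable hf_meas hf_bdd)
  have hHs := integrable_huberLoss_comp hσ0.le (residual_integrable hfstar_meas hfstar_bdd)
  have hdiff_bdd (x : X) : |fstar x - f x| ≤ 2 * M := by
    linarith [abs_sub (fstar x) (f x), hf_bdd x, hfstar_bdd x]
  have hsum_bdd (x : X) : |fstar x + f x| ≤ 2 * M := by
    linarith [abs_add_le (fstar x) (f x), hf_bdd x, hfstar_bdd x]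
  have hcross : Integrable (fun p : X × ℝ => (fstar p.1 - f p.1) * p.2) ρ :=
    hY.bdd_mul (c := 2 * M) (by fun_prop) (.of_forall fun p => hdiff_bdd p.1)
  have hprod : Integrable (fun x => (fstar x - f x) * (fstar x + f x)) ρ.fst :=
    (integrable_bounded (by fun_prop) hsum_bdd).bdd_mul (c := 2 * M) (by fun_prop)
      (.of_forall hdiff_bdd)
  have hmean : Integrable (fun x => (fstar x - f x) * fstar x) ρ.fst :=
    (integrable_bounded hfstar_meas hfstar_bdd).bdd_mul (c := 2 * M) (by fun_prop)
      (.of_forall hdiff_bdd)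
  have hprod' : Integrable (fun p : X × ℝ => (fstar p.1 - f p.1) * (fstar p.1 + f p.1)) ρ :=
    hprod.comp_measurable measurable_fst
  have hsq_eq (p : X × ℝ) : (p.2 - f p.1) ^ 2 - (p.2 - fstar p.1) ^ 2
      = 2 * ((fstar p.1 - f p.1) * p.2) - (fstar p.1 - f p.1) * (fstar p.1 + f p.1) := by
    ring
  have hsq : Integrable (fun p : X × ℝ => (p.2 - f p.1) ^ 2 - (p.2 - fstar p.1) ^ 2) ρ := by
    simp only [hsq_eq]
    exact (hcross.const_mul 2).sub hprod'
  have hsq_integral : ∫ x, (f x - fstar x) ^ 2 ∂ρ.fst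
      = ∫ p, ((p.2 - f p.1) ^ 2 - (p.2 - fstar p.1) ^ 2) ∂ρ := by
    have hfst : ∫ p, (fstar p.1 - f p.1) * (fstar p.1 + f p.1) ∂ρ
        = ∫ x, (fstar x - f x) * (fstar x + f x) ∂ρ.fst :=
      (integral_map measurable_fst.aemeasurable hprod.aestronglyMeasurable).symm
    simp only [hsq_eq]
    rw [integral_sub (hcross.const_mul 2) hprod', integral_const_mul, hfst,
      integral_mul_snd_eq_integral_mul_condMean (h := fun x => fstar x - f x) hfstar_mean hcross,
      ← integral_const_mul, ← integral_sub (hmean.const_mul 2) hprod]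
    congr 1 with x
    ring
  have hH : Integrable
      (fun p : X × ℝ => huberLoss σ (p.2 - f p.1) - huberLoss σ (p.2 - fstar p.1)) ρ :=
    hHf.sub hHs
  rw [hsq_integral, ← integral_sub hHf hHs, ← integral_sub hH hsq]
  have hpoint (p : X × ℝ) :
      ‖huberLoss σ (p.2 - f p.1) - huberLoss σ (p.2 - fstar p.1)
        - ((p.2 - f p.1) ^ 2 - (p.2 - fstar p.1) ^ 2)‖
        ≤ 4 * M / (σ / 2) ^ ε * |p.2| ^ (1 + ε) := by
    calc _ ≤ 4 * M * max (|p.2| - σ / 2) 0 :=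
          abs_huberLoss_sub_sub_le hσM.le (hf_bdd _) (hfstar_bdd _)
      _ ≤ 4 * M * (|p.2| ^ (1 + ε) / (σ / 2) ^ ε) := by
          gcongr
          exact max_sub_zero_le_rpow hε.le (by positivity) (abs_nonneg _)
      _ = _ := by ring
  have hmom0 : 0 ≤ ∫ p, |p.2| ^ (1 + ε) ∂ρ := integral_nonneg fun p => by positivity
  calc _ ≤ ∫ p, 4 * M / (σ / 2) ^ ε * |p.2| ^ (1 + ε) ∂ρ :=
        norm_integral_le_of_norm_le (hmom.const_mul _) (.of_forall hpoint)
    _ = 2 ^ ε * (4 * M) * (∫ p, |p.2| ^ (1 + ε) ∂ρ) / σ ^ ε := by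
        rw [integral_const_mul, Real.div_rpow hσ0.le zero_le_two]
        field_simp
    _ ≤ 2 ^ ε * (8 * (M + 1) ^ 2) * (∫ p, |p.2| ^ (1 + ε) ∂ρ) / σ ^ ε := by
        have hconst : 4 * M ≤ 8 * (M + 1) ^ 2 := by nlinarith
        gcongr
    _ = _ := by
        rw [Real.rpow_add two_pos]
        norm_num
        ring
end

section
/- (Variance bound.) Suppose E|Y|^{1+ε} = ∫_{X×ℝ} |y|^{1+ε} dρ(x,y) < ∞ for some ε > 0, that ‖f⋆‖_∞ ≤ M, and that σ > max(2M, 1). For any measurable f : X → ℝ with ‖f‖_∞ ≤ M, the random variable ξ(x,y) = ℓ_σ(y − f(x)) − ℓ_σ(y − f⋆(x)) satisfies E[ξ²] ≤ c₁ ‖f − f⋆‖_{2,ρ}^{2(ε−1)₊/(ε+1)} + c₂ σ^{1−ε}, where c₁ = 64(M+1)²(E|Y|^{1+ε} + M² + 1), c₂ = 48M²(E|Y|^{1+ε} + M^{1+ε}) + 16M² E|Y|^{1+ε}, and (ε−1)₊ = max(ε−1, 0). -/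
open MeasureTheory

/-- Local Lipschitz estimate: on `[-B, B]` the Huber loss has Lipschitz constant
`2 min(σ, B)`. -/
lemma abs_huberLoss_sub_le {σ B a b : ℝ} (hσ : 0 ≤ σ) (ha : |a| ≤ B) (hb : |b| ≤ B) :
    |huberLoss σ a - huberLoss σ b| ≤ 2 * min σ B * |a - b| := by
  wlog hab : |b| ≤ |a| generalizing a b
  · rw [abs_sub_comm, abs_sub_comm a b]
    exact this hb ha (le_of_not_ge hab)
  have hm : 0 ≤ min σ B := le_min hσ ((abs_nonneg a).trans ha)
  suffices h : |huberLoss σ a - huberLoss σ b| ≤ 2 * min σ B * (|a| - |b|) from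
    h.trans (mul_le_mul_of_nonneg_left (abs_sub_abs_le_abs_sub a b) (by positivity))
  have hb0 := abs_nonneg b
  unfold huberLoss
  rw [← sq_abs a, ← sq_abs b]
  rcases min_cases σ B with ⟨h, _⟩ | ⟨h, _⟩ <;> rw [h] <;> split_ifs <;> rw [abs_le] <;>
    constructor <;> nlinarith

/-- Squared version of the local Lipschitz estimate for the Huber loss. -/
lemma sq_huberLoss_sub_le {σ B a b : ℝ} (hσ : 0 ≤ σ) (ha : |a| ≤ B) (hb : |b| ≤ B) :
    (huberLoss σ a - huberLoss σ b) ^ 2 ≤ 4 * (a - b) ^ 2 * min σ B ^ 2 := by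
  have h := pow_le_pow_left₀ (abs_nonneg _) (abs_huberLoss_sub_le hσ ha hb) 2
  rw [sq_abs, mul_pow, sq_abs] at h
  linarith

lemma Real.add_rpow_le_two_mul {a b p : ℝ} (ha : 0 ≤ a) (hb : 0 ≤ b) (hp : 1 ≤ p)
    (hp2 : p ≤ 2) : (a + b) ^ p ≤ 2 * (a ^ p + b ^ p) := by
  lift a to NNReal using ha
  lift b to NNReal using hb
  have h : ((a : ℝ) + b) ^ p ≤ 2 ^ (p - 1) * ((a : ℝ) ^ p + (b : ℝ) ^ p) := by
    exact_mod_cast NNReal.rpow_add_le_mul_rpow_add_rpow a b hp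
  refine h.trans (mul_le_mul_of_nonneg_right ?_ (by positivity))
  calc (2 : ℝ) ^ (p - 1) ≤ 2 ^ (1 : ℝ) :=
        Real.rpow_le_rpow_of_exponent_le one_le_two (by linarith)
    _ = 2 := Real.rpow_one 2

lemma min_sq_le_rpow_mul_rpow {σ B ε : ℝ} (hσ : 0 < σ) (hB : 0 ≤ B) (hε : 0 < ε)
    (hε1 : ε ≤ 1) : min σ B ^ 2 ≤ σ ^ (1 - ε) * B ^ (1 + ε) := by
  have hm : 0 ≤ min σ B := le_min hσ.le hB
  calc min σ B ^ 2 = min σ B ^ (1 - ε) * min σ B ^ (1 + ε) := by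
        rw [← Real.rpow_add_of_nonneg hm (by linarith) (by linarith), ← Real.rpow_natCast]
        congr 1
        push_cast
        ring
    _ ≤ σ ^ (1 - ε) * B ^ (1 + ε) :=
        mul_le_mul (Real.rpow_le_rpow hm (min_le_left _ _) (by linarith))
          (Real.rpow_le_rpow hm (min_le_right _ _) (by linarith)) (by positivity) (by positivity)

/-- Hölder's inequality for `d² g`, with the higher norm of a bounded `d` controlled by its
second moment. -/
lemma integral_sq_mul_le_of_bounded {Ω : Type*} [MeasurableSpace Ω] {μ : Measure Ω}
    [IsFiniteMeasure μ] {p q K : ℝ} (hpq : p.HolderConjugate q) (hK : 1 ≤ K) {d g : Ω → ℝ}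
    (hd : Measurable d) (hdK : ∀ ω, |d ω| ≤ K) (hg0 : ∀ ω, 0 ≤ g ω)
    (hg : MemLp g (ENNReal.ofReal p) μ) :
    ∫ ω, d ω ^ 2 * g ω ∂μ
      ≤ K ^ 2 * (∫ ω, d ω ^ 2 ∂μ) ^ (1 / q) * (∫ ω, g ω ^ p ∂μ) ^ (1 / p) := by
  have hK0 : 0 < K := by linarith
  have hq := hpq.symm.pos
  have hdsq : ∀ ω, d ω ^ 2 ≤ K ^ 2 := fun ω => sq_le_sq' (abs_le.1 (hdK ω)).1 (abs_le.1 (hdK ω)).2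
  have hmem : ∀ r, MemLp (fun ω => d ω ^ 2) r μ := fun r =>
    MemLp.of_bound (hd.pow_const 2).aestronglyMeasurable (K ^ 2)
      (ae_of_all _ fun ω => by simpa using hdsq ω)
  refine (integral_mul_le_Lp_mul_Lq_of_nonneg hpq.symm (ae_of_all _ fun ω => sq_nonneg (d ω))
    (ae_of_all _ hg0) (hmem _) hg).trans ?_
  refine mul_le_mul_of_nonneg_right ?_
    (Real.rpow_nonneg (integral_nonneg fun ω => Real.rpow_nonneg (hg0 ω) _) _)
  have hpow : ∀ ω, (d ω ^ 2) ^ q ≤ (K ^ 2) ^ q * d ω ^ 2 := fun ω => by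
    have h1 : d ω ^ 2 / K ^ 2 ≤ 1 := (div_le_one (by positivity)).2 (hdsq ω)
    have h2 : (d ω ^ 2 / K ^ 2) ^ q ≤ d ω ^ 2 / K ^ 2 := by
      simpa using Real.rpow_le_rpow_of_exponent_ge' (by positivity) h1 zero_le_one hpq.symm.lt.le
    have h3 : d ω ^ 2 / K ^ 2 ≤ d ω ^ 2 := div_le_self (sq_nonneg _) (one_le_pow₀ hK)
    calc (d ω ^ 2) ^ q = (K ^ 2) ^ q * (d ω ^ 2 / K ^ 2) ^ q := by
          rw [← Real.mul_rpow (by positivity) (by positivity), mul_div_cancel₀ _ (by positivity)]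
      _ ≤ (K ^ 2) ^ q * d ω ^ 2 := mul_le_mul_of_nonneg_left (h2.trans h3) (by positivity)
  have hint : ∫ ω, (d ω ^ 2) ^ q ∂μ ≤ (K ^ 2) ^ q * ∫ ω, d ω ^ 2 ∂μ := by
    rw [← integral_const_mul]
    exact integral_mono_of_nonneg (ae_of_all _ fun ω => by positivity)
      ((memLp_one_iff_integrable.1 (hmem 1)).const_mul _) (ae_of_all _ hpow)
  calc (∫ ω, (d ω ^ 2) ^ q ∂μ) ^ (1 / q)
      ≤ ((K ^ 2) ^ q * ∫ ω, d ω ^ 2 ∂μ) ^ (1 / q) :=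
        Real.rpow_le_rpow (integral_nonneg fun ω => by positivity) hint (by positivity)
    _ = K ^ 2 * (∫ ω, d ω ^ 2 ∂μ) ^ (1 / q) := by
        rw [Real.mul_rpow (by positivity) (integral_nonneg fun ω => sq_nonneg _),
          ← Real.rpow_mul (by positivity), mul_one_div_cancel hq.ne', Real.rpow_one]

/-- Variance bound: under the `(1+ε)`-moment condition, for measurable `f` bounded by `M`
and `σ > max(2M,1)`, the random variable `ξ(x,y) = ℓ_σ(y−f(x)) − ℓ_σ(y−f⋆(x))` satisfies
`E[ξ²] ≤ c₁ ‖f−f⋆‖_{2,ρ}^{2(ε−1)₊/(ε+1)} + c₂ σ^{1−ε}` with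
`c₁ = 64(M+1)²(E|Y|^{1+ε}+M²+1)` and `c₂ = 48M²(E|Y|^{1+ε}+M^{1+ε}) + 16M² E|Y|^{1+ε}`. -/
theorem variance_bound
    {X : Type*} [MeasurableSpace X] [MetricSpace X] [CompactSpace X] [BorelSpace X]
    (ρ : Measure (X × ℝ)) [IsProbabilityMeasure ρ]
    (ε M σ : ℝ) (hε : 0 < ε) (hσ : max (2 * M) 1 < σ)
    (hmom : Integrable (fun p : X × ℝ => |p.2| ^ (1 + ε)) ρ)
    (fstar : X → ℝ) (hfstar_meas : Measurable fstar)
    (hfstar_bdd : ∀ x, |fstar x| ≤ M)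
    (hfstar_mean : ∀ᵐ x ∂ρ.fst, fstar x = ∫ y, y ∂(ρ.condKernel x))
    (f : X → ℝ) (hf_meas : Measurable f) (hf_bdd : ∀ x, |f x| ≤ M) :
    (∫ p, (huberLoss σ (p.2 - f p.1) - huberLoss σ (p.2 - fstar p.1)) ^ 2 ∂ρ)
      ≤ 64 * (M + 1) ^ 2 * ((∫ p, |p.2| ^ (1 + ε) ∂ρ) + M ^ 2 + 1)
          * (Real.sqrt (∫ x, (f x - fstar x) ^ 2 ∂ρ.fst)) ^ (2 * max (ε - 1) 0 / (ε + 1))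
        + (48 * M ^ 2 * ((∫ p, |p.2| ^ (1 + ε) ∂ρ) + M ^ (1 + ε))
            + 16 * M ^ 2 * (∫ p, |p.2| ^ (1 + ε) ∂ρ)) * σ ^ (1 - ε) := by
  have hσ0 : 0 < σ := by linarith [le_max_right (2 * M) 1]
  obtain ⟨⟨x₀, -⟩⟩ : Nonempty (X × ℝ) := nonempty_of_isProbabilityMeasure ρ
  have hM : 0 ≤ M := (abs_nonneg _).trans (hf_bdd x₀)
  set A : ℝ := ∫ p, |p.2| ^ (1 + ε) ∂ρ with hA
  have hA0 : 0 ≤ A := integral_nonneg fun p => by positivity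
  have hS : ∫ x, (f x - fstar x) ^ 2 ∂ρ.fst = ∫ p, (f p.1 - fstar p.1) ^ 2 ∂ρ :=
    integral_map measurable_fst.aemeasurable
      ((hf_meas.sub hfstar_meas).pow_const 2).aestronglyMeasurable
  rw [hS]
  set S : ℝ := ∫ p, (f p.1 - fstar p.1) ^ 2 ∂ρ
  have hS0 : 0 ≤ S := integral_nonneg fun p => by positivity
  have hdiff : ∀ x, |f x - fstar x| ≤ 2 * M := fun x => by
    linarith [abs_sub (f x) (fstar x), hf_bdd x, hfstar_bdd x]
  have hpt : ∀ p : X × ℝ, (huberLoss σ (p.2 - f p.1) - huberLoss σ (p.2 - fstar p.1)) ^ 2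
      ≤ 4 * (f p.1 - fstar p.1) ^ 2 * min σ (|p.2| + M) ^ 2 := fun p => by
    have h := sq_huberLoss_sub_le (B := |p.2| + M) hσ0.le
      ((abs_sub p.2 (f p.1)).trans (by linarith [hf_bdd p.1]))
      ((abs_sub p.2 (fstar p.1)).trans (by linarith [hfstar_bdd p.1]))
    rwa [show (p.2 - f p.1 - (p.2 - fstar p.1)) ^ 2 = (f p.1 - fstar p.1) ^ 2 by ring] at h
  rcases le_or_gt ε 1 with hε1 | hε1
  · have hbound : ∀ p : X × ℝ, (huberLoss σ (p.2 - f p.1) - huberLoss σ (p.2 - fstar p.1)) ^ 2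
        ≤ 32 * M ^ 2 * σ ^ (1 - ε) * (|p.2| ^ (1 + ε) + M ^ (1 + ε)) := fun p => by
      have hd : (f p.1 - fstar p.1) ^ 2 ≤ (2 * M) ^ 2 :=
        sq_le_sq' (abs_le.1 (hdiff p.1)).1 (abs_le.1 (hdiff p.1)).2
      have hB : 0 ≤ |p.2| + M := by positivity
      calc _ ≤ _ := hpt p
        _ ≤ 4 * (2 * M) ^ 2 * (σ ^ (1 - ε) * (2 * (|p.2| ^ (1 + ε) + M ^ (1 + ε)))) := by
            gcongr
            exact (min_sq_le_rpow_mul_rpow hσ0 hB hε hε1).trans (mul_le_mul_of_nonneg_left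
              (Real.add_rpow_le_two_mul (abs_nonneg _) hM (by linarith) (by linarith))
              (by positivity))
        _ = _ := by ring
    have hint := integral_mono_of_nonneg (ae_of_all ρ fun p => sq_nonneg _)
      ((hmom.add (integrable_const (M ^ (1 + ε)))).const_mul (32 * M ^ 2 * σ ^ (1 - ε)))
      (ae_of_all ρ hbound)
    rw [integral_const_mul] at hint
    simp only [Pi.add_apply] at hint
    rw [integral_add hmom (integrable_const _), ← hA] at hint
    simp only [integral_const, probReal_univ, one_smul] at hint
    refine hint.trans ?_
    have h1 : 0 ≤ 64 * (M + 1) ^ 2 * (A + M ^ 2 + 1)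
        * Real.sqrt S ^ (2 * max (ε - 1) 0 / (ε + 1)) := by positivity
    have h2 : 0 ≤ M ^ 2 * σ ^ (1 - ε) * (A + M ^ (1 + ε)) := by positivity
    have h3 : 0 ≤ M ^ 2 * σ ^ (1 - ε) * A := by positivity
    nlinarith
  · have hpq : ((1 + ε) / 2).HolderConjugate ((ε + 1) / (ε - 1)) := by
      rw [Real.holderConjugate_iff]
      refine ⟨by linarith, ?_⟩
      rw [inv_div, inv_div, add_comm ε 1, ← add_div, div_eq_one_iff_eq (by positivity)]
      ring
    have hp0 : 0 < (1 + ε) / 2 := by positivity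
    have hd_meas : Measurable fun p : X × ℝ => f p.1 - fstar p.1 :=
      (hf_meas.comp measurable_fst).sub (hfstar_meas.comp measurable_fst)
    have hdK : ∀ p : X × ℝ, |f p.1 - fstar p.1| ≤ 2 * M + 1 := fun p => by linarith [hdiff p.1]
    have hypow : ∀ y : ℝ, (y ^ 2) ^ ((1 + ε) / 2) = |y| ^ (1 + ε) := fun y => by
      rw [← sq_abs, ← Real.rpow_natCast, ← Real.rpow_mul (abs_nonneg y)]
      congr 1
      push_cast
      ring
    have hy : MemLp (fun p : X × ℝ => p.2 ^ 2) (ENNReal.ofReal ((1 + ε) / 2)) ρ := by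
      rw [← integrable_norm_rpow_iff (measurable_snd.pow_const 2).aestronglyMeasurable
        (by simpa using hp0) ENNReal.ofReal_ne_top, ENNReal.toReal_ofReal hp0.le]
      simpa only [norm_pow, Real.norm_eq_abs, sq_abs, hypow] using hmom
    have hy1 : Integrable (fun p : X × ℝ => p.2 ^ 2) ρ :=
      hy.integrable (by rw [ENNReal.one_le_ofReal]; exact hpq.lt.le)
    have hdy : Integrable (fun p : X × ℝ => (f p.1 - fstar p.1) ^ 2 * p.2 ^ 2) ρ :=
      hy1.bdd_mul (c := (2 * M + 1) ^ 2) (hd_meas.pow_const 2).aestronglyMeasurable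
        (ae_of_all _ fun p => by
          rw [norm_pow, Real.norm_eq_abs]
          exact pow_le_pow_left₀ (abs_nonneg _) (hdK p) 2)
    have hd1 : Integrable (fun p : X × ℝ => (f p.1 - fstar p.1) ^ 2 * 1) ρ :=
      (integrable_const (1 : ℝ)).bdd_mul (c := (2 * M + 1) ^ 2)
        (hd_meas.pow_const 2).aestronglyMeasurable
        (ae_of_all _ fun p => by
          rw [norm_pow, Real.norm_eq_abs]
          exact pow_le_pow_left₀ (abs_nonneg _) (hdK p) 2)
    have hbound : ∀ p : X × ℝ, (huberLoss σ (p.2 - f p.1) - huberLoss σ (p.2 - fstar p.1)) ^ 2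
        ≤ 8 * ((f p.1 - fstar p.1) ^ 2 * p.2 ^ 2)
          + 8 * M ^ 2 * ((f p.1 - fstar p.1) ^ 2 * 1) := fun p => by
      have hmin : min σ (|p.2| + M) ^ 2 ≤ 2 * (p.2 ^ 2 + M ^ 2) := by
        refine (pow_le_pow_left₀ (le_min hσ0.le (by positivity)) (min_le_right _ _) 2).trans ?_
        nlinarith [sq_nonneg (|p.2| - M), sq_abs p.2]
      calc _ ≤ _ := hpt p
        _ ≤ 4 * (f p.1 - fstar p.1) ^ 2 * (2 * (p.2 ^ 2 + M ^ 2)) := by gcongr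
        _ = _ := by ring
    have hint := integral_mono_of_nonneg (ae_of_all ρ fun p => sq_nonneg _)
      ((hdy.const_mul 8).add (hd1.const_mul (8 * M ^ 2))) (ae_of_all ρ hbound)
    simp only [Pi.add_apply] at hint
    rw [integral_add (hdy.const_mul 8) (hd1.const_mul (8 * M ^ 2)), integral_const_mul,
      integral_const_mul] at hint
    have hK : 1 ≤ 2 * M + 1 := by linarith
    have hH1 := integral_sq_mul_le_of_bounded hpq hK hd_meas hdK (fun p => sq_nonneg p.2) hy
    have hH2 := integral_sq_mul_le_of_bounded (μ := ρ) hpq hK hd_meas hdK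
      (fun _ => zero_le_one) (memLp_const (1 : ℝ))
    simp only [hypow] at hH1
    simp only [Real.one_rpow, integral_const, probReal_univ, one_smul] at hH2
    have hexp : Real.sqrt S ^ (2 * max (ε - 1) 0 / (ε + 1)) = S ^ (1 / ((ε + 1) / (ε - 1))) := by
      rw [max_eq_left (by linarith), Real.sqrt_eq_rpow, ← Real.rpow_mul hS0, one_div_div]
      congr 1
      ring
    rw [hexp]
    have hT : 0 ≤ S ^ (1 / ((ε + 1) / (ε - 1))) := by positivity
    set T : ℝ := S ^ (1 / ((ε + 1) / (ε - 1)))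
    have hAp : A ^ (1 / ((1 + ε) / 2)) ≤ A + 1 :=
      calc A ^ (1 / ((1 + ε) / 2)) ≤ (A + 1) ^ (1 / ((1 + ε) / 2)) :=
            Real.rpow_le_rpow hA0 (by linarith) (by positivity)
        _ ≤ (A + 1) ^ (1 : ℝ) := Real.rpow_le_rpow_of_exponent_le (by linarith)
            ((div_le_one hp0).2 hpq.lt.le)
        _ = A + 1 := Real.rpow_one _
    have hsecond : 0 ≤ (48 * M ^ 2 * (A + M ^ (1 + ε)) + 16 * M ^ 2 * A) * σ ^ (1 - ε) := by
      positivity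
    refine le_add_of_le_of_nonneg ?_ hsecond
    calc _ ≤ _ := hint
      _ ≤ 8 * ((2 * M + 1) ^ 2 * T * (A + 1)) + 8 * M ^ 2 * ((2 * M + 1) ^ 2 * T * 1) := by
          gcongr
          exact hH1.trans (mul_le_mul_of_nonneg_left hAp (by positivity))
      _ = 8 * (2 * M + 1) ^ 2 * (A + M ^ 2 + 1) * T := by ring
      _ ≤ 64 * (M + 1) ^ 2 * (A + M ^ 2 + 1) * T := by
          gcongr ?_ * _ * _
          nlinarith
end

section
/- (Huber-loss tail estimate.) Suppose E|Y|^{1+ε} < ∞ for some ε > 0, ‖f⋆‖_∞ ≤ M, σ > max(2M,1), and f : X → ℝ is measurable with ‖f‖_∞ ≤ M. Then | ∫_{{(x,y) : |y| ≥ σ/2}} [ℓ_σ(y − f(x)) − ℓ_σ(y − f⋆(x))] dρ(x,y) | ≤ 2^{2+ε} ‖f − f⋆‖_∞ E|Y|^{1+ε} / σ^ε. -/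
open MeasureTheory

/-- The Huber loss with scale `σ` is `2σ`-Lipschitz. -/
theorem abs_huberLoss_sub_le_s7 {σ : ℝ} (hσ : 0 ≤ σ) (s t : ℝ) :
    |huberLoss σ s - huberLoss σ t| ≤ 2 * σ * |s - t| := by
  have one_sided (a b : ℝ) : huberLoss σ a - huberLoss σ b ≤ 2 * σ * |a - b| := by
    have hab : |a| - |b| ≤ |a - b| := abs_sub_abs_le_abs_sub a b
    have hscaled : 2 * σ * (|a| - |b|) ≤ 2 * σ * |a - b| := by gcongr
    have hnonneg : 0 ≤ 2 * σ * |a - b| := by positivity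
    have ha := abs_nonneg a
    have hb := abs_nonneg b
    unfold huberLoss
    rw [← sq_abs a, ← sq_abs b]
    split_ifs with h₁ h₂ h₂
    · rcases le_total |a| |b| with h | h <;> nlinarith
    · nlinarith
    · nlinarith [sq_nonneg (|b| - σ)]
    · nlinarith
  rw [abs_le]
  have h := one_sided t s
  rw [abs_sub_comm] at h
  exact ⟨by linarith, one_sided s t⟩

/-- Huber-loss tail estimate:
`|∫_{|y| ≥ σ/2} [ℓ_σ(y−f(x)) − ℓ_σ(y−f⋆(x))] dρ| ≤ 2^{2+ε} ‖f−f⋆‖_∞ E|Y|^{1+ε} / σ^ε`. -/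
theorem huber_loss_tail_estimate
    {X : Type*} [MeasurableSpace X] [MetricSpace X] [CompactSpace X] [BorelSpace X]
    (ρ : Measure (X × ℝ)) [IsProbabilityMeasure ρ]
    (ε M σ : ℝ) (hε : 0 < ε) (hσ : max (2 * M) 1 < σ)
    (hmom : Integrable (fun p : X × ℝ => |p.2| ^ (1 + ε)) ρ)
    (fstar : X → ℝ) (hfstar_meas : Measurable fstar)
    (hfstar_bdd : ∀ x, |fstar x| ≤ M)
    (hfstar_mean : ∀ᵐ x ∂ρ.fst, fstar x = ∫ y, y ∂(ρ.condKernel x))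
    (f : X → ℝ) (hf_meas : Measurable f) (hf_bdd : ∀ x, |f x| ≤ M) :
    |∫ p in {p : X × ℝ | σ / 2 ≤ |p.2|},
        (huberLoss σ (p.2 - f p.1) - huberLoss σ (p.2 - fstar p.1)) ∂ρ|
      ≤ (2 : ℝ) ^ (2 + ε) * (⨆ x, |f x - fstar x|) * (∫ p, |p.2| ^ (1 + ε) ∂ρ) / σ ^ ε := by
  have hσ_pos : 0 < σ := by linarith [le_max_right (2 * M) 1]
  set D := ⨆ x, |f x - fstar x|
  have hbdd : BddAbove (Set.range fun x => |f x - fstar x|) := by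
    refine ⟨M + M, ?_⟩
    rintro _ ⟨x, rfl⟩
    exact (abs_sub _ _).trans (add_le_add (hf_bdd x) (hfstar_bdd x))
  have hD_nonneg : 0 ≤ D := Real.iSup_nonneg fun x => abs_nonneg _
  set C := 2 * σ * D * (2 / σ) ^ (1 + ε) with hC
  have hC_nonneg : 0 ≤ C := by positivity
  have hset : MeasurableSet {p : X × ℝ | σ / 2 ≤ |p.2|} :=
    measurableSet_le measurable_const (by fun_prop)
  have hpointwise (p : X × ℝ) (hp : σ / 2 ≤ |p.2|) :
      ‖huberLoss σ (p.2 - f p.1) - huberLoss σ (p.2 - fstar p.1)‖ ≤ C * |p.2| ^ (1 + ε) := by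
    have hlip := abs_huberLoss_sub_le_s7 hσ_pos.le (p.2 - f p.1) (p.2 - fstar p.1)
    rw [sub_sub_sub_cancel_left, abs_sub_comm (fstar p.1)] at hlip
    have hsup : |f p.1 - fstar p.1| ≤ D := le_ciSup hbdd p.1
    have hone : 1 ≤ (2 / σ) ^ (1 + ε) * |p.2| ^ (1 + ε) := by
      rw [← Real.mul_rpow (by positivity) (abs_nonneg _)]
      refine Real.one_le_rpow ?_ (by linarith)
      rw [div_mul_eq_mul_div, le_div_iff₀ hσ_pos]
      linarith
    calc _ ≤ 2 * σ * |f p.1 - fstar p.1| := hlip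
      _ ≤ 2 * σ * D * 1 := by rw [mul_one]; gcongr
      _ ≤ 2 * σ * D * ((2 / σ) ^ (1 + ε) * |p.2| ^ (1 + ε)) := by gcongr
      _ = C * |p.2| ^ (1 + ε) := by rw [hC]; ring
  have hint : Integrable (fun p : X × ℝ => C * |p.2| ^ (1 + ε)) ρ := hmom.const_mul C
  have hconst : C = 2 ^ (2 + ε) * D / σ ^ ε := by
    rw [hC, Real.div_rpow zero_le_two hσ_pos.le, Real.rpow_add hσ_pos, Real.rpow_one,
      show (2 : ℝ) + ε = 1 + (1 + ε) by ring, Real.rpow_add zero_lt_two 1 (1 + ε), Real.rpow_one]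
    field_simp
  calc _ ≤ ∫ p in {p : X × ℝ | σ / 2 ≤ |p.2|}, C * |p.2| ^ (1 + ε) ∂ρ :=
        norm_integral_le_of_norm_le hint.integrableOn
          ((ae_restrict_iff' hset).2 (.of_forall hpointwise))
    _ ≤ ∫ p, C * |p.2| ^ (1 + ε) ∂ρ :=
        setIntegral_le_integral hint (.of_forall fun p => by positivity)
    _ = C * ∫ p, |p.2| ^ (1 + ε) ∂ρ := integral_const_mul _ _
    _ = _ := by rw [hconst]; ring
end

section
/- (Square-loss tail estimate.) Suppose E|Y|^{1+ε} < ∞ for some ε > 0, ‖f⋆‖_∞ ≤ M, σ > max(2M,1), and f : X → ℝ is measurable with ‖f‖_∞ ≤ M. Then | ∫_{{(x,y) : |y| ≥ σ/2}} [(y − f(x))² − (y − f⋆(x))²] dρ(x,y) | ≤ 2^{1+ε} ‖f − f⋆‖_∞ E|Y|^{1+ε} / σ^ε + 2^{1+ε} (‖f‖_∞ + ‖f⋆‖_∞)² E|Y|^{1+ε} / σ^{1+ε}. -/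
open MeasureTheory

/-- On the tail `σ / 2 ≤ |y|`, a power of `|y|` is controlled by any higher power. -/
lemma abs_rpow_le_of_half_le {σ y a b : ℝ} (hσ : 0 < σ) (hb : 0 ≤ b)
    (hy : σ / 2 ≤ |y|) : |y| ^ a ≤ 2 ^ b * |y| ^ (a + b) / σ ^ b := by
  have hy0 : 0 < |y| := by linarith
  have hle : σ ^ b ≤ 2 ^ b * |y| ^ b := by
    rw [← Real.mul_rpow zero_le_two hy0.le]
    exact Real.rpow_le_rpow hσ.le (by linarith) hb
  rw [le_div_iff₀ (Real.rpow_pos_of_pos hσ b), Real.rpow_add hy0]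
  nlinarith [mul_le_mul_of_nonneg_left hle (Real.rpow_pos_of_pos hy0 a).le]

/-- The difference of two square losses, bounded by uniform bounds on the predictors. -/
lemma abs_sq_sub_sub_sq_sub_le {y u v A B D : ℝ} (hu : |u| ≤ A) (hv : |v| ≤ B)
    (huv : |u - v| ≤ D) (hD : D ≤ A + B) :
    |(y - u) ^ 2 - (y - v) ^ 2| ≤ D * (2 * |y|) + (A + B) ^ 2 := by
  have hD0 : 0 ≤ D := (abs_nonneg _).trans huv
  have hfactor : (y - u) ^ 2 - (y - v) ^ 2 = (u - v) * (u + v - 2 * y) := by ring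
  have hsum : |u + v - 2 * y| ≤ A + B + 2 * |y| := by
    calc |u + v - 2 * y| ≤ |u + v| + |2 * y| := abs_sub _ _
      _ ≤ |u| + |v| + 2 * |y| := by
        rw [abs_mul, abs_two]
        gcongr
        exact abs_add_le u v
      _ ≤ A + B + 2 * |y| := by gcongr
  rw [hfactor, abs_mul]
  calc |u - v| * |u + v - 2 * y| ≤ D * (A + B + 2 * |y|) := by gcongr
    _ ≤ D * (2 * |y|) + (A + B) ^ 2 := by nlinarith

/-- Square-loss tail estimate:
`|∫_{|y| ≥ σ/2} [(y−f(x))² − (y−f⋆(x))²] dρ|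
   ≤ 2^{1+ε} ‖f−f⋆‖_∞ E|Y|^{1+ε}/σ^ε + 2^{1+ε} (‖f‖_∞+‖f⋆‖_∞)² E|Y|^{1+ε}/σ^{1+ε}`. -/
theorem square_loss_tail_estimate
    {X : Type*} [MeasurableSpace X] [MetricSpace X] [CompactSpace X] [BorelSpace X]
    (ρ : Measure (X × ℝ)) [IsProbabilityMeasure ρ]
    (ε M σ : ℝ) (hε : 0 < ε) (hσ : max (2 * M) 1 < σ)
    (hmom : Integrable (fun p : X × ℝ => |p.2| ^ (1 + ε)) ρ)
    (fstar : X → ℝ) (hfstar_meas : Measurable fstar)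
    (hfstar_bdd : ∀ x, |fstar x| ≤ M)
    (hfstar_mean : ∀ᵐ x ∂ρ.fst, fstar x = ∫ y, y ∂(ρ.condKernel x))
    (f : X → ℝ) (hf_meas : Measurable f) (hf_bdd : ∀ x, |f x| ≤ M) :
    |∫ p in {p : X × ℝ | σ / 2 ≤ |p.2|},
        ((p.2 - f p.1) ^ 2 - (p.2 - fstar p.1) ^ 2) ∂ρ|
      ≤ (2 : ℝ) ^ (1 + ε) * (⨆ x, |f x - fstar x|) * (∫ p, |p.2| ^ (1 + ε) ∂ρ) / σ ^ ε
        + (2 : ℝ) ^ (1 + ε) * ((⨆ x, |f x|) + ⨆ x, |fstar x|) ^ 2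
            * (∫ p, |p.2| ^ (1 + ε) ∂ρ) / σ ^ (1 + ε) := by
  have hσ0 : 0 < σ := zero_lt_one.trans ((le_max_right _ _).trans_lt hσ)
  have hX : Nonempty X := (nonempty_of_isProbabilityMeasure ρ).map Prod.fst
  have hf_le : ∀ x, |f x| ≤ ⨆ x, |f x| :=
    le_ciSup ⟨M, by rintro _ ⟨x, rfl⟩; exact hf_bdd x⟩
  have hfstar_le : ∀ x, |fstar x| ≤ ⨆ x, |fstar x| :=
    le_ciSup ⟨M, by rintro _ ⟨x, rfl⟩; exact hfstar_bdd x⟩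
  have hsub : ∀ x, |f x - fstar x| ≤ (⨆ x, |f x|) + ⨆ x, |fstar x| := fun x =>
    (abs_sub _ _).trans (add_le_add (hf_le x) (hfstar_le x))
  have hsub_le : ∀ x, |f x - fstar x| ≤ ⨆ x, |f x - fstar x| :=
    le_ciSup ⟨_, by rintro _ ⟨x, rfl⟩; exact hsub x⟩
  have hD : (⨆ x, |f x - fstar x|) ≤ (⨆ x, |f x|) + ⨆ x, |fstar x| := ciSup_le hsub
  have hD0 : 0 ≤ ⨆ x, |f x - fstar x| := Real.iSup_nonneg fun _ => abs_nonneg _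
  generalize (⨆ x, |f x - fstar x|) = D at *
  generalize (⨆ x, |f x|) = A at *
  generalize (⨆ x, |fstar x|) = B at *
  set C : ℝ := 2 ^ (1 + ε) * D / σ ^ ε + 2 ^ (1 + ε) * (A + B) ^ 2 / σ ^ (1 + ε) with hC
  have hC0 : 0 ≤ C := by positivity
  have hS : MeasurableSet {p : X × ℝ | σ / 2 ≤ |p.2|} :=
    measurableSet_le measurable_const (measurable_snd.abs)
  have hbound : ∀ p : X × ℝ, σ / 2 ≤ |p.2| →
      ‖(p.2 - f p.1) ^ 2 - (p.2 - fstar p.1) ^ 2‖ ≤ C * |p.2| ^ (1 + ε) := by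
    intro p hp
    have hone := abs_rpow_le_of_half_le (a := 1) hσ0 hε.le hp
    have hzero := abs_rpow_le_of_half_le (a := 0) (b := 1 + ε) hσ0 (by linarith) hp
    rw [Real.rpow_one] at hone
    rw [Real.rpow_zero, zero_add] at hzero
    calc ‖(p.2 - f p.1) ^ 2 - (p.2 - fstar p.1) ^ 2‖
        ≤ D * (2 * |p.2|) + (A + B) ^ 2 * 1 := by
          rw [mul_one]
          exact abs_sq_sub_sub_sq_sub_le (hf_le _) (hfstar_le _) (hsub_le _) hD
      _ ≤ D * (2 * (2 ^ ε * |p.2| ^ (1 + ε) / σ ^ ε))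
          + (A + B) ^ 2 * (2 ^ (1 + ε) * |p.2| ^ (1 + ε) / σ ^ (1 + ε)) := by gcongr
      _ = C * |p.2| ^ (1 + ε) := by
          rw [hC, Real.rpow_add zero_lt_two 1 ε, Real.rpow_one]
          ring
  have hint : Integrable (fun p : X × ℝ => C * |p.2| ^ (1 + ε)) ρ := hmom.const_mul C
  calc |∫ p in {p : X × ℝ | σ / 2 ≤ |p.2|}, ((p.2 - f p.1) ^ 2 - (p.2 - fstar p.1) ^ 2) ∂ρ|
      ≤ ∫ p in {p : X × ℝ | σ / 2 ≤ |p.2|}, C * |p.2| ^ (1 + ε) ∂ρ :=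
        norm_integral_le_of_norm_le hint.integrableOn
          ((ae_restrict_iff' hS).2 (Filter.Eventually.of_forall hbound))
    _ ≤ ∫ p, C * |p.2| ^ (1 + ε) ∂ρ :=
        setIntegral_le_integral hint (Filter.Eventually.of_forall fun p => by positivity)
    _ = _ := by
        rw [integral_const_mul, hC]
        ring
end

section
/- (Second moment of squared-loss difference, strong moment case.) Suppose E|Y|^{1+ε} < ∞ for some ε > 1, ‖f⋆‖_∞ ≤ M, and f : X → ℝ is measurable with ‖f‖_∞ ≤ M. Then ∫_{X×ℝ} (f(x) − f⋆(x))² (2y − f(x) − f⋆(x))² dρ(x,y) ≤ 64 (M+1)² (E|Y|^{1+ε} + M² + 1) · ‖f − f⋆‖_{2,ρ}^{(2ε−2)/(1+ε)}. -/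
open MeasureTheory

/-- Hölder's inequality for `|g| ^ θ * h`, with the exponent of `g` normalised to be `2`. -/
lemma integral_abs_rpow_mul_le_of_bounded {Ω : Type*} [MeasurableSpace Ω] {μ : Measure Ω}
    [IsFiniteMeasure μ] {p q θ C : ℝ} (hpq : q.HolderConjugate p) (hθ : θ * q = 2)
    {g h : Ω → ℝ} (hg : Measurable g) (hgC : ∀ ω, |g ω| ≤ C) (hh : Measurable h)
    (hh0 : ∀ ω, 0 ≤ h ω) (hhp : Integrable (fun ω => h ω ^ p) μ) :
    Integrable (fun ω => |g ω| ^ θ * h ω) μ ∧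
      ∫ ω, |g ω| ^ θ * h ω ∂μ
        ≤ Real.sqrt (∫ ω, g ω ^ 2 ∂μ) ^ θ * (∫ ω, h ω ^ p ∂μ) ^ (1 / p) := by
  have hθ0 : 0 ≤ θ := by
    by_contra! hlt
    nlinarith [hpq.pos]
  have hgm : Measurable fun ω => |g ω| ^ θ := by
    simp only [← Real.norm_eq_abs]
    exact hg.norm.pow_const θ
  have hgb : ∀ ω, ‖|g ω| ^ θ‖ ≤ C ^ θ := fun ω => by
    rw [Real.norm_of_nonneg (by positivity)]
    exact Real.rpow_le_rpow (abs_nonneg _) (hgC ω) hθ0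
  have hgLq : MemLp (fun ω => |g ω| ^ θ) (ENNReal.ofReal q) μ :=
    MemLp.of_bound hgm.aestronglyMeasurable _ (Filter.Eventually.of_forall hgb)
  have hp0 : ENNReal.ofReal p ≠ 0 := by simpa using hpq.symm.pos
  have hhLp : MemLp h (ENNReal.ofReal p) μ := by
    rw [← integrable_norm_rpow_iff hh.aestronglyMeasurable hp0 ENNReal.ofReal_ne_top,
      ENNReal.toReal_ofReal hpq.symm.nonneg]
    simpa only [Real.norm_of_nonneg (hh0 _)] using hhp
  have hhint : Integrable h μ :=
    hhLp.integrable (by simpa using hpq.symm.lt.le)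
  refine ⟨hhint.bdd_mul hgm.aestronglyMeasurable (Filter.Eventually.of_forall hgb), ?_⟩
  refine (integral_mul_le_Lp_mul_Lq_of_nonneg hpq
    (Filter.Eventually.of_forall fun ω => by positivity)
    (Filter.Eventually.of_forall hh0) hgLq hhLp).trans_eq ?_
  have hpow : ∀ ω, (|g ω| ^ θ) ^ q = g ω ^ 2 := fun ω => by
    rw [← Real.rpow_mul (abs_nonneg _), hθ, Real.rpow_two, sq_abs]
  have hq : 1 / q = 1 / 2 * θ := by
    have := hpq.ne_zero
    field_simp
    linarith
  simp only [hpow]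
  rw [Real.sqrt_eq_rpow, ← Real.rpow_mul (integral_nonneg fun ω => sq_nonneg _), hq]

/-- Interpolating `a ^ 2` between the powers `θ` and `2 - θ`, for `|a|` bounded by `2 * M`. -/
lemma sq_le_mul_abs_rpow {a M θ : ℝ} (hθ0 : 0 < θ) (hθ2 : θ ≤ 2) (hM : 0 ≤ M)
    (ha : |a| ≤ 2 * M) : a ^ 2 ≤ 4 * (M + 1) ^ 2 * |a| ^ θ := by
  have hsplit : a ^ 2 = |a| ^ (2 - θ) * |a| ^ θ := by
    rw [← Real.rpow_add' (abs_nonneg _) (by norm_num)]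
    norm_num
  have hbound : |a| ^ (2 - θ) ≤ 4 * (M + 1) ^ 2 :=
    calc |a| ^ (2 - θ) ≤ (2 * (M + 1)) ^ (2 - θ) :=
          Real.rpow_le_rpow (abs_nonneg _) (by linarith) (by linarith)
      _ ≤ (2 * (M + 1)) ^ (2 : ℝ) :=
          Real.rpow_le_rpow_of_exponent_le (by linarith) (by linarith)
      _ = 4 * (M + 1) ^ 2 := by rw [Real.rpow_two]; ring
  rw [hsplit]
  gcongr

/-- Second moment of the squared-loss difference, strong moment case (`ε > 1`):
`∫ (f−f⋆)² (2y−f−f⋆)² dρ ≤ 64 (M+1)² (E|Y|^{1+ε}+M²+1) ‖f−f⋆‖_{2,ρ}^{(2ε−2)/(1+ε)}`. -/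
theorem second_moment_square_loss_diff_strong
    {X : Type*} [MeasurableSpace X] [MetricSpace X] [CompactSpace X] [BorelSpace X]
    (ρ : Measure (X × ℝ)) [IsProbabilityMeasure ρ]
    (ε M : ℝ) (hε : 1 < ε) (hM : 0 ≤ M)
    (hmom : Integrable (fun p : X × ℝ => |p.2| ^ (1 + ε)) ρ)
    (fstar : X → ℝ) (hfstar_meas : Measurable fstar)
    (hfstar_bdd : ∀ x, |fstar x| ≤ M)
    (hfstar_mean : ∀ᵐ x ∂ρ.fst, fstar x = ∫ y, y ∂(ρ.condKernel x))
    (f : X → ℝ) (hf_meas : Measurable f) (hf_bdd : ∀ x, |f x| ≤ M) :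
    (∫ p, (f p.1 - fstar p.1) ^ 2 * (2 * p.2 - f p.1 - fstar p.1) ^ 2 ∂ρ)
      ≤ 64 * (M + 1) ^ 2 * ((∫ p, |p.2| ^ (1 + ε) ∂ρ) + M ^ 2 + 1)
          * (Real.sqrt (∫ x, (f x - fstar x) ^ 2 ∂ρ.fst)) ^ ((2 * ε - 2) / (1 + ε)) := by
  have hfst : ∫ x, (f x - fstar x) ^ 2 ∂ρ.fst = ∫ p, (f p.1 - fstar p.1) ^ 2 ∂ρ := by
    rw [Measure.fst, integral_map measurable_fst.aemeasurable]
    exact ((hf_meas.sub hfstar_meas).pow_const 2).aestronglyMeasurable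
  rw [hfst]
  set θ : ℝ := (2 * ε - 2) / (1 + ε) with hθ
  set A : ℝ := ∫ p, |p.2| ^ (1 + ε) ∂ρ with hA
  set D : ℝ := Real.sqrt (∫ p, (f p.1 - fstar p.1) ^ 2 ∂ρ) ^ θ with hD
  have hθ0 : 0 < θ := div_pos (by linarith) (by linarith)
  have hθ2 : θ ≤ 2 := by
    rw [hθ, div_le_iff₀ (by linarith)]
    linarith
  have hA0 : 0 ≤ A := integral_nonneg fun p => by positivity
  have hD0 : 0 ≤ D := by positivity
  have hε1 : 0 < ε - 1 := by linarith
  have hε2 : 0 < 1 + ε := by linarith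
  have hpq : ((1 + ε) / (ε - 1)).HolderConjugate ((1 + ε) / 2) := by
    rw [Real.holderConjugate_iff]
    refine ⟨by rw [lt_div_iff₀ hε1]; linarith, ?_⟩
    field_simp
    ring
  have hθq : θ * ((1 + ε) / (ε - 1)) = 2 := by
    rw [hθ]
    field_simp
  have hg : Measurable fun p : X × ℝ => f p.1 - fstar p.1 :=
    (hf_meas.sub hfstar_meas).comp measurable_fst
  have hgM : ∀ p : X × ℝ, |f p.1 - fstar p.1| ≤ 2 * M := fun p =>
    (abs_sub _ _).trans (by linarith [hf_bdd p.1, hfstar_bdd p.1])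
  have hsq : ∀ p : X × ℝ, (p.2 ^ 2) ^ ((1 + ε) / 2) = |p.2| ^ (1 + ε) := fun p => by
    rw [← sq_abs, ← Real.rpow_two, ← Real.rpow_mul (abs_nonneg _)]
    congr 1
    ring
  obtain ⟨hint_y, hle_y⟩ := integral_abs_rpow_mul_le_of_bounded (μ := ρ)
    (h := fun p => p.2 ^ 2) hpq hθq hg hgM (measurable_snd.pow_const 2)
    (fun p => sq_nonneg _) (by simpa only [hsq] using hmom)
  obtain ⟨hint_M, hle_M⟩ := integral_abs_rpow_mul_le_of_bounded (μ := ρ)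
    (h := fun _ => M ^ 2) hpq hθq hg hgM measurable_const
    (fun _ => sq_nonneg _) (integrable_const _)
  simp only [hsq, ← hA, ← hD] at hle_y
  rw [integral_const, probReal_univ, one_smul, ← Real.rpow_mul (sq_nonneg M),
    mul_one_div_cancel hpq.symm.ne_zero, Real.rpow_one, ← hD] at hle_M
  have hAroot : A ^ (1 / ((1 + ε) / 2)) ≤ A + 1 := by
    have hexp : 1 / ((1 + ε) / 2) ≤ 1 := by
      rw [div_le_one hpq.symm.pos]
      exact hpq.symm.lt.le
    calc A ^ (1 / ((1 + ε) / 2)) ≤ (A + 1) ^ (1 / ((1 + ε) / 2)) :=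
          Real.rpow_le_rpow hA0 (by linarith) (by positivity)
      _ ≤ (A + 1) ^ (1 : ℝ) := Real.rpow_le_rpow_of_exponent_le (by linarith) hexp
      _ = A + 1 := Real.rpow_one _
  have hpt : ∀ p : X × ℝ, (f p.1 - fstar p.1) ^ 2 * (2 * p.2 - f p.1 - fstar p.1) ^ 2
      ≤ 32 * (M + 1) ^ 2 * (|f p.1 - fstar p.1| ^ θ * p.2 ^ 2
          + |f p.1 - fstar p.1| ^ θ * M ^ 2) := fun p => by
    have hsum : (f p.1 + fstar p.1) ^ 2 ≤ (2 * M) ^ 2 :=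
      sq_le_sq' (by linarith [(abs_le.1 (hf_bdd p.1)).1, (abs_le.1 (hfstar_bdd p.1)).1])
        (by linarith [(abs_le.1 (hf_bdd p.1)).2, (abs_le.1 (hfstar_bdd p.1)).2])
    have hlin : (2 * p.2 - f p.1 - fstar p.1) ^ 2 ≤ 8 * (p.2 ^ 2 + M ^ 2) := by
      nlinarith [sq_nonneg (2 * p.2 + (f p.1 + fstar p.1))]
    calc _ ≤ (4 * (M + 1) ^ 2 * |f p.1 - fstar p.1| ^ θ) * (8 * (p.2 ^ 2 + M ^ 2)) :=
          mul_le_mul (sq_le_mul_abs_rpow hθ0 hθ2 hM (hgM p)) hlin (sq_nonneg _) (by positivity)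
      _ = _ := by ring
  calc _ ≤ ∫ p, 32 * (M + 1) ^ 2 * (|f p.1 - fstar p.1| ^ θ * p.2 ^ 2
          + |f p.1 - fstar p.1| ^ θ * M ^ 2) ∂ρ :=
        integral_mono_of_nonneg (Filter.Eventually.of_forall fun p => by positivity)
          ((hint_y.add hint_M).const_mul _) (Filter.Eventually.of_forall hpt)
    _ = 32 * (M + 1) ^ 2 * ((∫ p, |f p.1 - fstar p.1| ^ θ * p.2 ^ 2 ∂ρ)
          + ∫ p, |f p.1 - fstar p.1| ^ θ * M ^ 2 ∂ρ) := by
        rw [integral_const_mul, integral_add hint_y hint_M]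
    _ ≤ 32 * (M + 1) ^ 2 * (D * (A + 1) + D * M ^ 2) := by
        gcongr
        exact hle_y.trans (by gcongr)
    _ = 32 * ((M + 1) ^ 2 * (A + M ^ 2 + 1) * D) := by ring
    _ ≤ 64 * ((M + 1) ^ 2 * (A + M ^ 2 + 1) * D) := by
        gcongr
        norm_num
    _ = 64 * (M + 1) ^ 2 * (A + M ^ 2 + 1) * D := by ring
end

section
/- (Second moment of squared-loss difference, weak moment case.) Suppose E|Y|^{1+ε} < ∞ for some 0 < ε ≤ 1, ‖f⋆‖_∞ ≤ M, σ > max(2M,1), and f : X → ℝ is measurable with ‖f‖_∞ ≤ M. Then ∫_{{(x,y) : |y| < σ/2}} (f(x) − f⋆(x))² (2y − f(x) − f⋆(x))² dρ(x,y) ≤ 48 M² (E|Y|^{1+ε} + M^{1+ε}) σ^{1−ε}. -/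
open MeasureTheory

/-- Interpolating a square: `t² ≤ t^{1+ε} s^{1-ε}` for `0 ≤ t ≤ s` and `0 ≤ ε ≤ 1`. -/
theorem sq_le_rpow_mul_rpow {t s ε : ℝ} (ht : 0 ≤ t) (hts : t ≤ s) (hε : 0 ≤ ε) (hε1 : ε ≤ 1) :
    t ^ 2 ≤ t ^ (1 + ε) * s ^ (1 - ε) := by
  have hsq : t ^ 2 = t ^ (1 + ε) * t ^ (1 - ε) := by
    rw [← Real.rpow_add_of_nonneg ht (by linarith) (by linarith), ← Real.rpow_natCast]
    norm_num
  rw [hsq]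
  gcongr

/-- If `|a|, |b| ≤ M`, the squared-loss difference at `y` satisfies
`(a-b)² (2y-a-b)² ≤ 32 M² (y² + M²)`. -/
theorem sq_sub_mul_sq_le {a b y M : ℝ} (ha : |a| ≤ M) (hb : |b| ≤ M) :
    (a - b) ^ 2 * (2 * y - a - b) ^ 2 ≤ 32 * M ^ 2 * (y ^ 2 + M ^ 2) := by
  obtain ⟨ha₁, ha₂⟩ := abs_le.mp ha
  obtain ⟨hb₁, hb₂⟩ := abs_le.mp hb
  have hdiff : (a - b) ^ 2 ≤ 4 * M ^ 2 := by nlinarith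
  have hsum : (a + b) ^ 2 ≤ 4 * M ^ 2 := by nlinarith
  have hlin : (2 * y - a - b) ^ 2 ≤ 8 * (y ^ 2 + M ^ 2) := by
    nlinarith [sq_nonneg (2 * y + (a + b))]
  calc (a - b) ^ 2 * (2 * y - a - b) ^ 2
      ≤ (4 * M ^ 2) * (8 * (y ^ 2 + M ^ 2)) := by gcongr
    _ = 32 * M ^ 2 * (y ^ 2 + M ^ 2) := by ring

/-- Second moment of the squared-loss difference, weak moment case (`0 < ε ≤ 1`):
`∫_{|y| < σ/2} (f−f⋆)² (2y−f−f⋆)² dρ ≤ 48 M² (E|Y|^{1+ε} + M^{1+ε}) σ^{1−ε}`. -/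
theorem second_moment_square_loss_diff_weak
    {X : Type*} [MeasurableSpace X] [MetricSpace X] [CompactSpace X] [BorelSpace X]
    (ρ : Measure (X × ℝ)) [IsProbabilityMeasure ρ]
    (ε M σ : ℝ) (hε : 0 < ε) (hε1 : ε ≤ 1) (hσ : max (2 * M) 1 < σ)
    (hmom : Integrable (fun p : X × ℝ => |p.2| ^ (1 + ε)) ρ)
    (fstar : X → ℝ) (hfstar_meas : Measurable fstar)
    (hfstar_bdd : ∀ x, |fstar x| ≤ M)
    (hfstar_mean : ∀ᵐ x ∂ρ.fst, fstar x = ∫ y, y ∂(ρ.condKernel x))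
    (f : X → ℝ) (hf_meas : Measurable f) (hf_bdd : ∀ x, |f x| ≤ M) :
    (∫ p in {p : X × ℝ | |p.2| < σ / 2},
        (f p.1 - fstar p.1) ^ 2 * (2 * p.2 - f p.1 - fstar p.1) ^ 2 ∂ρ)
      ≤ 48 * M ^ 2 * ((∫ p, |p.2| ^ (1 + ε) ∂ρ) + M ^ (1 + ε)) * σ ^ (1 - ε) := by
  obtain ⟨p₀⟩ : Nonempty (X × ℝ) := nonempty_of_isProbabilityMeasure ρ
  have hM : 0 ≤ M := (abs_nonneg _).trans (hf_bdd p₀.1)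
  obtain ⟨hσM, hσ1⟩ := max_lt_iff.mp hσ
  have hS : MeasurableSet {p : X × ℝ | |p.2| < σ / 2} :=
    measurableSet_lt (by fun_prop) measurable_const
  have hint : Integrable
      (fun p : X × ℝ => 48 * M ^ 2 * (|p.2| ^ (1 + ε) + M ^ (1 + ε)) * σ ^ (1 - ε)) ρ :=
    ((hmom.add (integrable_const _)).const_mul _).mul_const _
  have hMsq := sq_le_rpow_mul_rpow hM (by linarith : M ≤ σ) hε.le hε1
  calc _ ≤ ∫ p in {p : X × ℝ | |p.2| < σ / 2},
        48 * M ^ 2 * (|p.2| ^ (1 + ε) + M ^ (1 + ε)) * σ ^ (1 - ε) ∂ρ := by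
        refine integral_mono_of_nonneg (ae_of_all _ fun p => by positivity) hint.restrict ?_
        filter_upwards [ae_restrict_mem hS] with p hp
        have hp' : |p.2| < σ / 2 := hp
        have hysq := sq_le_rpow_mul_rpow (abs_nonneg p.2) (by linarith : |p.2| ≤ σ) hε.le hε1
        rw [sq_abs] at hysq
        calc _ ≤ 32 * M ^ 2 * (p.2 ^ 2 + M ^ 2) := sq_sub_mul_sq_le (hf_bdd _) (hfstar_bdd _)
          _ ≤ 48 * M ^ 2 *
              (|p.2| ^ (1 + ε) * σ ^ (1 - ε) + M ^ (1 + ε) * σ ^ (1 - ε)) := by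
            gcongr
            norm_num
          _ = _ := by ring
    _ ≤ ∫ p, 48 * M ^ 2 * (|p.2| ^ (1 + ε) + M ^ (1 + ε)) * σ ^ (1 - ε) ∂ρ :=
        setIntegral_le_integral hint (ae_of_all _ fun p => by
          have : 0 ≤ σ := by linarith
          positivity)
    _ = _ := by
        rw [integral_mul_const, integral_const_mul, integral_add hmom (integrable_const _)]
        simp
end

section
/- (Positivity of the Huber-risk derivative at zero for an asymmetric zero-mean density.) Let p_ε : ℝ → ℝ be the probability density defined by p_ε(t) = (1/2) e^{−(t + 1/4)} for t ≥ −1/4 and p_ε(t) = e^{2(t + 1/4)} for t < −1/4. Then for every σ > 0, 2 ∫_σ^{∞} (u − σ) p_ε(u) du + 2 ∫_{−∞}^{−σ} (u + σ) p_ε(u) du > 0. (In particular, for σ ≥ 1/4 this quantity equals e^{−σ−1/4} − (1/2) e^{1/2 − 2σ}, and for 0 < σ < 1/4 it equals 2σ + e^{−σ−1/4} − e^{σ−1/4}.) -/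
open MeasureTheory

/-- The asymmetric zero-mean density `p_ε` from the counterexample. -/
noncomputable def pEps (t : ℝ) : ℝ :=
  if -(1/4) ≤ t then (1/2) * Real.exp (-(t + 1/4)) else Real.exp (2 * (t + 1/4))

/-- The exponentially damped affine function `(u - c) e^{-b(u - d)}` has an explicit integral
over `(a, ∞)`, provided it has constant sign there. -/
lemma integrableOn_and_integral_Ioi_sub_mul_exp {a b c d : ℝ} (hb : 0 < b) (hca : c ≤ a) :
    IntegrableOn (fun u : ℝ => (u - c) * Real.exp (-(b * (u - d)))) (Set.Ioi a) ∧
      ∫ u in Set.Ioi a, (u - c) * Real.exp (-(b * (u - d)))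
        = ((a - c) / b + 1 / b ^ 2) * Real.exp (-(b * (a - d))) := by
  have hderiv : ∀ x ∈ Set.Ici a,
      HasDerivAt (fun u : ℝ => -((u - c) / b + 1 / b ^ 2) * Real.exp (-(b * (u - d))))
        ((x - c) * Real.exp (-(b * (x - d)))) x := by
    intro x _
    have h₁ : HasDerivAt (fun u : ℝ => -((u - c) / b + 1 / b ^ 2)) (-(1 / b)) x :=
      ((((hasDerivAt_id x).sub_const c).div_const b).add_const (1 / b ^ 2)).neg
    have h₂ : HasDerivAt (fun u : ℝ => Real.exp (-(b * (u - d))))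
        (Real.exp (-(b * (x - d))) * -(b * 1)) x :=
      ((((hasDerivAt_id x).sub_const d).const_mul b).neg).exp
    refine (h₁.mul h₂).congr_deriv ?_
    field_simp
    ring
  have hnonneg : ∀ x ∈ Set.Ioi a, 0 ≤ (x - c) * Real.exp (-(b * (x - d))) := fun x hx =>
    mul_nonneg (sub_nonneg.2 (hca.trans (le_of_lt hx))) (Real.exp_pos _).le
  have hlim : Filter.Tendsto
      (fun u : ℝ => -((u - c) / b + 1 / b ^ 2) * Real.exp (-(b * (u - d))))
      Filter.atTop (nhds 0) := by
    have hv : Filter.Tendsto (fun u : ℝ => b * (u - d)) Filter.atTop Filter.atTop :=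
      (Filter.tendsto_atTop_add_const_right _ (-d) Filter.tendsto_id).const_mul_atTop hb
    have h₁ := (Real.tendsto_pow_mul_exp_neg_atTop_nhds_zero 1).comp hv
    have h₀ := (Real.tendsto_pow_mul_exp_neg_atTop_nhds_zero 0).comp hv
    have h := (h₁.add (h₀.const_mul (b * (d - c) + 1))).const_mul (-(1 / b ^ 2))
    simp only [mul_zero, add_zero] at h
    refine h.congr fun u => ?_
    simp only [Function.comp_apply, pow_one, pow_zero]
    field_simp
    ring
  refine ⟨integrableOn_Ioi_deriv_of_nonneg' hderiv hnonneg hlim, ?_⟩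
  rw [integral_Ioi_of_hasDerivAt_of_nonneg' hderiv hnonneg hlim]
  ring

/-- The reflection of `integrableOn_and_integral_Ioi_sub_mul_exp` to a left half-line. -/
lemma integrableOn_and_integral_Iio_add_mul_exp {a b c d : ℝ} (hb : 0 < b) (hca : c ≤ a) :
    IntegrableOn (fun u : ℝ => (u + c) * Real.exp (b * (u + d))) (Set.Iio (-a)) ∧
      ∫ u in Set.Iio (-a), (u + c) * Real.exp (b * (u + d))
        = -(((a - c) / b + 1 / b ^ 2) * Real.exp (-(b * (a - d)))) := by
  obtain ⟨hint, hval⟩ := integrableOn_and_integral_Ioi_sub_mul_exp (d := d) hb hca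
  have hfun : (fun u : ℝ => (u + c) * Real.exp (b * (u + d)))
      = fun u : ℝ => -((-u - c) * Real.exp (-(b * (-u - d)))) := by
    funext u
    rw [show -(b * (-u - d)) = b * (u + d) by ring]
    ring
  rw [hfun]
  refine ⟨?_, ?_⟩
  · rw [← neg_neg a] at hint
    exact hint.comp_neg_Iio.neg
  · rw [integral_neg, ← integral_Iic_eq_integral_Iio,
      integral_comp_neg_Iic (-a) (fun u : ℝ => (u - c) * Real.exp (-(b * (u - d)))), neg_neg, hval]

lemma integral_Ioi_sub_mul_pEps {σ : ℝ} (hσ : 0 < σ) :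
    ∫ u in Set.Ioi σ, (u - σ) * pEps u = (1 / 2) * Real.exp (-σ - 1 / 4) := by
  have hcongr : ∫ u in Set.Ioi σ, (u - σ) * pEps u
      = ∫ u in Set.Ioi σ, (1 / 2) * ((u - σ) * Real.exp (-(1 * (u - -(1 / 4))))) := by
    refine setIntegral_congr_fun measurableSet_Ioi fun u hu => ?_
    have hu' : -(1 / 4) ≤ u := by linarith [Set.mem_Ioi.1 hu]
    simp only [pEps, if_pos hu', one_mul, sub_neg_eq_add]
    ring
  rw [hcongr, integral_const_mul,
    (integrableOn_and_integral_Ioi_sub_mul_exp one_pos le_rfl).2,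
    show -(1 * (σ - -(1 / 4))) = -σ - 1 / 4 by ring]
  ring

/-- Below the breakpoint `-1/4` the density is the single exponential `e^{2(t + 1/4)}`. -/
lemma integrableOn_and_integral_Iio_add_mul_pEps {a c : ℝ} (ha : 1 / 4 ≤ a) (hca : c ≤ a) :
    IntegrableOn (fun u : ℝ => (u + c) * pEps u) (Set.Iio (-a)) ∧
      ∫ u in Set.Iio (-a), (u + c) * pEps u
        = -(((a - c) / 2 + 1 / 4) * Real.exp (1 / 2 - 2 * a)) := by
  obtain ⟨hint, hval⟩ := integrableOn_and_integral_Iio_add_mul_exp (d := 1 / 4) two_pos hca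
  have heq : Set.EqOn (fun u : ℝ => (u + c) * Real.exp (2 * (u + 1 / 4)))
      (fun u => (u + c) * pEps u) (Set.Iio (-a)) := by
    intro u hu
    have hu' : ¬ -(1 / 4) ≤ u := by linarith [Set.mem_Iio.1 hu]
    simp only [pEps, if_neg hu']
  refine ⟨hint.congr_fun heq measurableSet_Iio, ?_⟩
  rw [← setIntegral_congr_fun measurableSet_Iio heq, hval,
    show -(2 * (a - 1 / 4)) = 1 / 2 - 2 * a by ring]
  norm_num

lemma integral_Iio_add_mul_pEps_of_lt {σ : ℝ} (hσ : σ < 1 / 4) :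
    ∫ u in Set.Iio (-σ), (u + σ) * pEps u = σ - (1 / 2) * Real.exp (σ - 1 / 4) := by
  obtain ⟨hint, hval⟩ := integrableOn_and_integral_Iio_add_mul_pEps le_rfl hσ.le
  have hle : -(1 / 4) ≤ -σ := by linarith
  have heq : Set.EqOn (fun u : ℝ => (u + σ) * ((1 / 2) * Real.exp (-(u + 1 / 4))))
      (fun u => (u + σ) * pEps u) (Set.Ico (-(1 / 4)) (-σ)) := by
    intro u hu
    simp only [pEps, if_pos hu.1]
  have hcont : Continuous fun u : ℝ => (u + σ) * ((1 / 2) * Real.exp (-(u + 1 / 4))) := by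
    fun_prop
  have hmid : IntegrableOn (fun u : ℝ => (u + σ) * pEps u) (Set.Ico (-(1 / 4)) (-σ)) :=
    ((hcont.integrableOn_Icc).mono_set Set.Ico_subset_Icc_self).congr_fun heq measurableSet_Ico
  have hderiv : ∀ x ∈ Set.uIcc (-(1 / 4)) (-σ),
      HasDerivAt (fun u : ℝ => -(u + σ + 1) * ((1 / 2) * Real.exp (-(u + 1 / 4))))
        ((x + σ) * ((1 / 2) * Real.exp (-(x + 1 / 4)))) x := by
    intro x _
    have h₁ : HasDerivAt (fun u : ℝ => -(u + σ + 1)) (-1) x :=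
      (((hasDerivAt_id x).add_const σ).add_const 1).neg
    have h₂ : HasDerivAt (fun u : ℝ => (1 / 2) * Real.exp (-(u + 1 / 4)))
        ((1 / 2) * (Real.exp (-(x + 1 / 4)) * -1)) x :=
      (((hasDerivAt_id x).add_const (1 / 4)).neg.exp).const_mul (1 / 2)
    refine (h₁.mul h₂).congr_deriv ?_
    ring
  have hmidval : ∫ u in Set.Ico (-(1 / 4)) (-σ), (u + σ) * pEps u
      = (1 / 2) * (σ + 3 / 4) - (1 / 2) * Real.exp (σ - 1 / 4) := by
    rw [← setIntegral_congr_fun measurableSet_Ico heq, integral_Ico_eq_integral_Ioo,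
      ← integral_Ioc_eq_integral_Ioo, ← intervalIntegral.integral_of_le hle,
      intervalIntegral.integral_eq_sub_of_hasDerivAt hderiv (hcont.intervalIntegrable _ _),
      show -(-σ + 1 / 4) = σ - 1 / 4 by ring, show -(-(1 / 4) + 1 / 4) = (0 : ℝ) by ring,
      Real.exp_zero]
    ring
  rw [← Set.Iio_union_Ico_eq_Iio hle,
    setIntegral_union ((Set.Iio_disjoint_Ici le_rfl).mono_right Set.Ico_subset_Ici_self)
      measurableSet_Ico hint hmid, hval, hmidval,
    show (1 / 2 - 2 * (1 / 4) : ℝ) = 0 by norm_num, Real.exp_zero]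
  ring

lemma half_mul_exp_lt_exp_of_quarter_le {σ : ℝ} (hσ : 1 / 4 ≤ σ) :
    (1 / 2) * Real.exp (1 / 2 - 2 * σ) < Real.exp (-σ - 1 / 4) := by
  have h₁ : (1 / 2 : ℝ) < Real.exp (-(1 / 2)) := by
    linarith [Real.add_one_lt_exp (show (-(1 / 2) : ℝ) ≠ 0 by norm_num)]
  have h₂ : Real.exp (-(1 / 2)) ≤ Real.exp (σ - 3 / 4) := Real.exp_le_exp.2 (by linarith)
  calc (1 / 2) * Real.exp (1 / 2 - 2 * σ)
      < Real.exp (σ - 3 / 4) * Real.exp (1 / 2 - 2 * σ) :=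
        mul_lt_mul_of_pos_right (h₁.trans_le h₂) (Real.exp_pos _)
    _ = Real.exp (-σ - 1 / 4) := by rw [← Real.exp_add]; ring_nf

lemma two_mul_add_exp_sub_exp_pos {σ : ℝ} (hσ : 0 < σ) (hσ' : σ < 1 / 4) :
    0 < 2 * σ + Real.exp (-σ - 1 / 4) - Real.exp (σ - 1 / 4) := by
  have hmul : Real.exp (-σ - 1 / 4) = Real.exp (-(2 * σ)) * Real.exp (σ - 1 / 4) := by
    rw [← Real.exp_add]; ring_nf
  have hlin : (1 - 2 * σ) * Real.exp (σ - 1 / 4) ≤ Real.exp (-σ - 1 / 4) := by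
    rw [hmul]
    exact mul_le_mul_of_nonneg_right (Real.one_sub_le_exp_neg _) (Real.exp_pos _).le
  have hlt : Real.exp (σ - 1 / 4) < 1 := Real.exp_lt_one_iff.2 (by linarith)
  nlinarith [mul_pos hσ (sub_pos.2 hlt)]

/-- Positivity of the Huber-risk derivative at zero for the asymmetric zero-mean
density `p_ε`: for every `σ > 0`,
`2∫_σ^∞ (u−σ) p_ε(u) du + 2∫_{−∞}^{−σ} (u+σ) p_ε(u) du > 0`; moreover this quantity
equals `e^{−σ−1/4} − (1/2) e^{1/2−2σ}` when `σ ≥ 1/4`, and equals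
`2σ + e^{−σ−1/4} − e^{σ−1/4}` when `0 < σ < 1/4`. -/
theorem huber_risk_derivative_at_zero_pos (σ : ℝ) (hσ : 0 < σ) :
    0 < 2 * (∫ u in Set.Ioi σ, (u - σ) * pEps u)
        + 2 * (∫ u in Set.Iio (-σ), (u + σ) * pEps u)
    ∧ (1/4 ≤ σ →
        2 * (∫ u in Set.Ioi σ, (u - σ) * pEps u)
          + 2 * (∫ u in Set.Iio (-σ), (u + σ) * pEps u)
        = Real.exp (-σ - 1/4) - (1/2) * Real.exp (1/2 - 2 * σ))
    ∧ (σ < 1/4 →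
        2 * (∫ u in Set.Ioi σ, (u - σ) * pEps u)
          + 2 * (∫ u in Set.Iio (-σ), (u + σ) * pEps u)
        = 2 * σ + Real.exp (-σ - 1/4) - Real.exp (σ - 1/4)) := by
  have hright := integral_Ioi_sub_mul_pEps hσ
  have hlarge : 1/4 ≤ σ →
      2 * (∫ u in Set.Ioi σ, (u - σ) * pEps u)
        + 2 * (∫ u in Set.Iio (-σ), (u + σ) * pEps u)
      = Real.exp (-σ - 1/4) - (1/2) * Real.exp (1/2 - 2 * σ) := by
    intro h
    rw [hright, (integrableOn_and_integral_Iio_add_mul_pEps h le_rfl).2]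
    ring
  have hsmall : σ < 1/4 →
      2 * (∫ u in Set.Ioi σ, (u - σ) * pEps u)
        + 2 * (∫ u in Set.Iio (-σ), (u + σ) * pEps u)
      = 2 * σ + Real.exp (-σ - 1/4) - Real.exp (σ - 1/4) := by
    intro h
    rw [hright, integral_Iio_add_mul_pEps_of_lt h]
    ring
  refine ⟨?_, hlarge, hsmall⟩
  rcases le_or_gt (1/4) σ with h | h
  · rw [hlarge h]
    exact sub_pos.2 (half_mul_exp_lt_exp_of_quarter_le h)
  · rw [hsmall h]
    exact two_mul_add_exp_sub_exp_pos hσ h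
end
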